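/- arXiv:2306.07018 — 2 statements merged into one kernel-verified Lean document; each statement's English description precedes it below -/
import Mathlib

section
/- (Upper bound on the LAFTE) Under Independence, Relevance, Monotonicity, the Double exclusion restriction, the positive response condition E[Y(0,0); {C1,A2}] ≥ 0, the monotone treatment response conditions E[Y(1,1)−Y(1,0); {C1,N2}] ≥ 0 and E[Y(0,1)−Y(0,0); {C1,A2}] ≥ 0, and the monotone treatment selection conditions μ({C1,N2})·E[Y(1,1); {C1,A2}] ≥ μ({C1,A2})·E[Y(1,1); {C1,N2}] and μ({C1,N2})·E[Y(1,1); {C1,C2}] ≥ μ({C1,C2})·E[Y(1,1); {C1,N2}], it holds that E[Y(1,1)−Y(0,0) | C] ≤ ΔE[D∧·Y|Z]/ΔE[D∧|Z] + ΔE[(1−D1)(1−D2)·Y|Z]/ΔE[D1|Z], where C := {C1,C2} ∪ {C1,N2} ∪ {C1,A2} satisfies μ(C) = ΔE[D1|Z] > 0. (Theorem 1, upper bound) -/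
open MeasureTheory ProbabilityTheory

noncomputable section

variable {Ω : Type*} [MeasurableSpace Ω]

/-- Observed first-part treatment: `D1 = D1(1)·Z + D1(0)·(1−Z)`. -/
def obsD1 (Z : Ω → ℝ) (D1 : Bool → Ω → ℝ) (ω : Ω) : ℝ :=
  D1 true ω * Z ω + D1 false ω * (1 - Z ω)

/-- Observed second-part treatment. -/
def obsD2 (Z : Ω → ℝ) (D1 : Bool → Ω → ℝ) (D2 : Bool → Bool → Ω → ℝ) (ω : Ω) : ℝ :=
  (D2 true true ω * obsD1 Z D1 ω + D2 true false ω * (1 - obsD1 Z D1 ω)) * Z ω +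
  (D2 false true ω * obsD1 Z D1 ω + D2 false false ω * (1 - obsD1 Z D1 ω)) * (1 - Z ω)

/-- Summary treatment `D∧ = D1·D2`. -/
def obsDand (Z : Ω → ℝ) (D1 : Bool → Ω → ℝ) (D2 : Bool → Bool → Ω → ℝ) (ω : Ω) : ℝ :=
  obsD1 Z D1 ω * obsD2 Z D1 D2 ω

/-- Summary treatment `D∨ = D1 + D2 − D1·D2`. -/
def obsDor (Z : Ω → ℝ) (D1 : Bool → Ω → ℝ) (D2 : Bool → Bool → Ω → ℝ) (ω : Ω) : ℝ :=
  obsD1 Z D1 ω + obsD2 Z D1 D2 ω - obsD1 Z D1 ω * obsD2 Z D1 D2 ω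

/-- Observed outcome `Y = Σ_{d1,d2} Y(Z,d1,d2)·1{D1=d1, D2=d2}`, written out using that the
observed treatments and the instrument are {0,1}-valued. The first index of `Yp` is `z`, the
second is `d1`, the third is `d2`. -/
def obsY (Z : Ω → ℝ) (D1 : Bool → Ω → ℝ) (D2 : Bool → Bool → Ω → ℝ)
    (Yp : Bool → Bool → Bool → Ω → ℝ) (ω : Ω) : ℝ :=
  (Yp true true true ω * obsD1 Z D1 ω * obsD2 Z D1 D2 ω +
   Yp true false true ω * (1 - obsD1 Z D1 ω) * obsD2 Z D1 D2 ω +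
   Yp true true false ω * obsD1 Z D1 ω * (1 - obsD2 Z D1 D2 ω) +
   Yp true false false ω * (1 - obsD1 Z D1 ω) * (1 - obsD2 Z D1 D2 ω)) * Z ω +
  (Yp false true true ω * obsD1 Z D1 ω * obsD2 Z D1 D2 ω +
   Yp false false true ω * (1 - obsD1 Z D1 ω) * obsD2 Z D1 D2 ω +
   Yp false true false ω * obsD1 Z D1 ω * (1 - obsD2 Z D1 D2 ω) +
   Yp false false false ω * (1 - obsD1 Z D1 ω) * (1 - obsD2 Z D1 D2 ω)) * (1 - Z ω)

/-- `ΔE[A|Z] := E[A | Z = 1] − E[A | Z = 0]`, expectations under conditional measures. -/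
def dE (μ : Measure Ω) (Z A : Ω → ℝ) : ℝ :=
  (∫ ω, A ω ∂(μ[|Z ⁻¹' {1}])) - (∫ ω, A ω ∂(μ[|Z ⁻¹' {0}]))

/-- The full-complier event `{C1,C2}`. -/
def CCev (D1 : Bool → Ω → ℝ) (D2 : Bool → Bool → Ω → ℝ) : Set Ω :=
  {ω | D1 true ω - D1 false ω = 1 ∧ D2 true true ω - D2 false false ω = 1}

/-- The mover event `{C1,N2}`. -/
def CNev (D1 : Bool → Ω → ℝ) (D2 : Bool → Bool → Ω → ℝ) : Set Ω :=
  {ω | D1 true ω - D1 false ω = 1 ∧ D2 true true ω = 0 ∧ D2 false false ω = 0}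

/-- The mover event `{C1,A2}`. -/
def CAev (D1 : Bool → Ω → ℝ) (D2 : Bool → Bool → Ω → ℝ) : Set Ω :=
  {ω | D1 true ω - D1 false ω = 1 ∧ D2 true true ω = 1 ∧ D2 false false ω = 1}

/-- The mover event `{N1,C2}`. -/
def NCev (D1 : Bool → Ω → ℝ) (D2 : Bool → Bool → Ω → ℝ) : Set Ω :=
  {ω | D1 true ω = 0 ∧ D1 false ω = 0 ∧ D2 true false ω - D2 false false ω = 1}

/-- The mover event `{A1,C2}`. -/
def ACev (D1 : Bool → Ω → ℝ) (D2 : Bool → Bool → Ω → ℝ) : Set Ω :=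
  {ω | D1 true ω = 1 ∧ D1 false ω = 1 ∧ D2 true true ω - D2 false true ω = 1}

/-!
Since `Z` is independent of the potential variables, each `ΔE[A|Z]` is the integral of the
difference between the two potential values of `A`. For `A = D1`, `D∧`, `D∧·Y` and
`(1−D1)(1−D2)·Y` this difference vanishes off the first-part compliers, so, with CC, CN and CA the
events `{C1,C2}`, `{C1,N2}` and `{C1,A2}`, the four contrasts equal `μ(CC ∪ CN ∪ CA)`,
`μ(CC ∪ CA)`, `E[Y(1,1); CC ∪ CA]` and `−E[Y(0,0); CC ∪ CN]`. Monotone treatment selection says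
that removing CN does not lower the mean of `Y(1,1)`, and positive response says that removing CA
does not raise the integral of `Y(0,0)`.
-/

lemma one_sub_eq_zero_or_one {R : Type*} [Ring R] {a : R} (ha : a = 0 ∨ a = 1) :
    1 - a = 0 ∨ 1 - a = 1 := by
  rcases ha with rfl | rfl <;> simp

lemma sub_eq_zero_or_one_of_le {R : Type*} [Ring R] [PartialOrder R] [ZeroLEOneClass R] {a b : R}
    (ha : a = 0 ∨ a = 1) (hb : b = 0 ∨ b = 1) (hab : a ≤ b) : b - a = 0 ∨ b - a = 1 := by
  rcases ha with rfl | rfl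
  · simpa using hb
  · rcases hb with rfl | rfl
    · exact .inl (sub_eq_zero.2 (zero_le_one.antisymm hab))
    · exact .inl (sub_self 1)

section Integral

variable {μ : Measure Ω} {f g : Ω → ℝ} {s t u : Set Ω}

lemma integrable_mul_of_eq_zero_or_one {b : Ω → ℝ} (hb : AEStronglyMeasurable b μ)
    (hb01 : ∀ ω, b ω = 0 ∨ b ω = 1) (hf : Integrable f μ) :
    Integrable (fun ω => b ω * f ω) μ := by
  refine hf.bdd_mul (c := 1) hb (.of_forall fun ω => ?_)
  rcases hb01 ω with h | h <;> simp [h]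

variable [IsFiniteMeasure μ]

lemma setIntegral_union_div_le_setIntegral_div (hst : Disjoint s t) (ht : MeasurableSet t)
    (hf : Integrable f μ) (hs : 0 < μ.real s)
    (hle : μ.real s * ∫ ω in t, f ω ∂μ ≤ μ.real t * ∫ ω in s, f ω ∂μ) :
    (∫ ω in s ∪ t, f ω ∂μ) / μ.real (s ∪ t) ≤ (∫ ω in s, f ω ∂μ) / μ.real s := by
  have hst_pos : 0 < μ.real s + μ.real t := add_pos_of_pos_of_nonneg hs measureReal_nonneg
  rw [setIntegral_union hst ht hf.integrableOn hf.integrableOn, measureReal_union hst ht,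
    div_le_div_iff₀ hst_pos hs]
  linarith

lemma setIntegral_union_sub_div_le (hst : Disjoint s t) (hsu : Disjoint s u) (htu : Disjoint t u)
    (ht : MeasurableSet t) (hu : MeasurableSet u) (hf : Integrable f μ) (hg : Integrable g μ)
    (hsu_pos : 0 < μ.real (s ∪ u)) (hgu : 0 ≤ ∫ ω in u, g ω ∂μ)
    (hfs : μ.real s * ∫ ω in t, f ω ∂μ ≤ μ.real t * ∫ ω in s, f ω ∂μ)
    (hfu : μ.real u * ∫ ω in t, f ω ∂μ ≤ μ.real t * ∫ ω in u, f ω ∂μ) :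
    (∫ ω in s ∪ t ∪ u, (f ω - g ω) ∂μ) / μ.real (s ∪ t ∪ u) ≤
      (∫ ω in s ∪ u, f ω ∂μ) / μ.real (s ∪ u) + -(∫ ω in s ∪ t, g ω ∂μ) / μ.real (s ∪ t ∪ u) := by
  have hf_mean : (∫ ω in s ∪ t ∪ u, f ω ∂μ) / μ.real (s ∪ t ∪ u) ≤
      (∫ ω in s ∪ u, f ω ∂μ) / μ.real (s ∪ u) := by
    rw [Set.union_right_comm]
    refine setIntegral_union_div_le_setIntegral_div (hst.union_left htu.symm) ht hf hsu_pos ?_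
    rw [measureReal_union hsu hu, setIntegral_union hsu hu hf.integrableOn hf.integrableOn]
    linarith
  have hg_le : ∫ ω in s ∪ t, g ω ∂μ ≤ ∫ ω in s ∪ t ∪ u, g ω ∂μ := by
    rw [setIntegral_union (hsu.union_left htu) hu hg.integrableOn hg.integrableOn]
    linarith
  rw [integral_sub hf.integrableOn hg.integrableOn, sub_eq_add_neg, add_div]
  gcongr

end Integral

section Instrument

lemma integral_cond_preimage_of_indepFun {T S E : Type*} [MeasurableSpace T] [MeasurableSpace S]
    [NormedAddCommGroup E] [NormedSpace ℝ E] {μ : Measure Ω} [IsFiniteMeasure μ]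
    {X : Ω → T} {Z : Ω → S} {f : T → E} {s : Set S} (hXZ : IndepFun X Z μ)
    (hX : AEMeasurable X μ) (hf : AEStronglyMeasurable f (μ.map X)) (hZ : Measurable Z)
    (hs : MeasurableSet s) (hμs : μ (Z ⁻¹' s) ≠ 0) :
    ∫ ω, f (X ω) ∂μ[|Z ⁻¹' s] = ∫ ω, f (X ω) ∂μ := by
  have hμs' : μ.real (Z ⁻¹' s) ≠ 0 := (measureReal_ne_zero_iff (measure_ne_top μ _)).2 hμs
  have hset : ∫ ω in Z ⁻¹' s, f (X ω) ∂μ = μ.real (Z ⁻¹' s) • ∫ ω, f (X ω) ∂μ :=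
    Indep.setIntegral_eq_smul hZ.comap_le hXZ.symm hX ⟨s, hs, rfl⟩ hf
  rw [ProbabilityTheory.cond, integral_smul_measure, hset, ENNReal.toReal_inv,
    ← measureReal_def, inv_smul_smul₀ hμs']

variable {μ : Measure Ω} {Z : Ω → ℝ}

lemma measure_preimage_toNat_ne_zero [IsProbabilityMeasure μ] (hZ : Measurable Z)
    (hZ01 : ∀ ω, Z ω = 0 ∨ Z ω = 1) (hZpos : 0 < μ (Z ⁻¹' {1})) (hZlt : μ (Z ⁻¹' {1}) < 1)
    (z : Bool) : μ (Z ⁻¹' {(z.toNat : ℝ)}) ≠ 0 := by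
  cases z with
  | true => simpa using hZpos.ne'
  | false =>
    have hcompl : Z ⁻¹' {0} = (Z ⁻¹' {1})ᶜ := by
      ext ω
      rcases hZ01 ω with h | h <;> simp [h]
    rw [Bool.toNat_false, Nat.cast_zero, hcompl,
      prob_compl_eq_one_sub (hZ (measurableSet_singleton 1))]
    exact (tsub_pos_of_lt hZlt).ne'

lemma dE_eq_integral_sub [IsFiniteMeasure μ] {A : Ω → ℝ} {B : Bool → Ω → ℝ} (hZ : Measurable Z)
    (hZne : ∀ z : Bool, μ (Z ⁻¹' {(z.toNat : ℝ)}) ≠ 0)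
    (hA : ∀ (z : Bool) ω, Z ω = z.toNat → A ω = B z ω) (hindep : ∀ z, IndepFun (B z) Z μ)
    (hB : ∀ z, Integrable (B z) μ) :
    dE μ Z A = ∫ ω, (B true ω - B false ω) ∂μ := by
  have hcond (z : Bool) : ∫ ω, A ω ∂μ[|Z ⁻¹' {(z.toNat : ℝ)}] = ∫ ω, B z ω ∂μ := by
    have hz : MeasurableSet {(z.toNat : ℝ)} := measurableSet_singleton _
    rw [integral_congr_ae (ae_cond_of_forall_mem (hZ hz) (hA z))]
    exact integral_cond_preimage_of_indepFun (f := id) (hindep z) (hB z).aemeasurable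
      aestronglyMeasurable_id hZ hz (hZne z)
  have htrue := hcond true
  have hfalse := hcond false
  simp only [Bool.toNat_true, Bool.toNat_false, Nat.cast_one, Nat.cast_zero] at htrue hfalse
  rw [dE, htrue, hfalse, integral_sub (hB true) (hB false)]

end Instrument

section Observed

variable {Z : Ω → ℝ} {D1 : Bool → Ω → ℝ} {D2 : Bool → Bool → Ω → ℝ}
  {Yp : Bool → Bool → Bool → Ω → ℝ} {z : Bool} {ω : Ω}

omit [MeasurableSpace Ω]

lemma obsD1_of_eq_toNat (hz : Z ω = z.toNat) : obsD1 Z D1 ω = D1 z ω := by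
  cases z <;> simp [obsD1, hz]

lemma obsD2_of_eq_toNat (hz : Z ω = z.toNat) :
    obsD2 Z D1 D2 ω = D2 z true ω * D1 z ω + D2 z false ω * (1 - D1 z ω) := by
  cases z <;> simp [obsD2, obsD1, hz]

lemma obsY_of_eq_toNat (hz : Z ω = z.toNat) :
    obsY Z D1 D2 Yp ω =
      Yp z true true ω * obsD1 Z D1 ω * obsD2 Z D1 D2 ω +
      Yp z false true ω * (1 - obsD1 Z D1 ω) * obsD2 Z D1 D2 ω +
      Yp z true false ω * obsD1 Z D1 ω * (1 - obsD2 Z D1 D2 ω) +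
      Yp z false false ω * (1 - obsD1 Z D1 ω) * (1 - obsD2 Z D1 D2 ω) := by
  cases z <;> simp [obsY, hz]

lemma obsDand_of_eq_toNat (hz : Z ω = z.toNat) (hD1 : D1 z ω = 0 ∨ D1 z ω = 1) :
    obsDand Z D1 D2 ω = D1 z ω * D2 z true ω := by
  rw [obsDand, obsD2_of_eq_toNat hz, obsD1_of_eq_toNat hz]
  rcases hD1 with h | h <;> simp [h]

lemma obsDand_mul_obsY_of_eq_toNat (hz : Z ω = z.toNat) (hD1 : D1 z ω = 0 ∨ D1 z ω = 1)
    (hD2 : D2 z true ω = 0 ∨ D2 z true ω = 1) :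
    obsDand Z D1 D2 ω * obsY Z D1 D2 Yp ω = D1 z ω * (D2 z true ω * Yp z true true ω) := by
  rw [obsDand, obsY_of_eq_toNat hz, obsD2_of_eq_toNat hz, obsD1_of_eq_toNat hz]
  rcases hD1 with h | h <;> rcases hD2 with h' | h' <;> simp [h, h']

lemma one_sub_obsD1_mul_one_sub_obsD2_mul_obsY_of_eq_toNat (hz : Z ω = z.toNat)
    (hD1 : D1 z ω = 0 ∨ D1 z ω = 1) (hD2 : D2 z false ω = 0 ∨ D2 z false ω = 1) :
    (1 - obsD1 Z D1 ω) * (1 - obsD2 Z D1 D2 ω) * obsY Z D1 D2 Yp ω =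
      (1 - D1 z ω) * ((1 - D2 z false ω) * Yp z false false ω) := by
  rw [obsY_of_eq_toNat hz, obsD2_of_eq_toNat hz, obsD1_of_eq_toNat hz]
  rcases hD1 with h | h <;> rcases hD2 with h' | h' <;> simp [h, h']

end Observed

section Compliers

variable {D1 : Bool → Ω → ℝ} {D2 : Bool → Bool → Ω → ℝ} {ω : Ω}

lemma measurableSet_CCev (hD1 : ∀ z, Measurable (D1 z)) (hD2 : ∀ z d, Measurable (D2 z d)) :
    MeasurableSet (CCev D1 D2) :=
  (measurableSet_eq_fun ((hD1 true).sub (hD1 false)) measurable_const).inter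
    (measurableSet_eq_fun ((hD2 true true).sub (hD2 false false)) measurable_const)

lemma measurableSet_CNev (hD1 : ∀ z, Measurable (D1 z)) (hD2 : ∀ z d, Measurable (D2 z d)) :
    MeasurableSet (CNev D1 D2) :=
  (measurableSet_eq_fun ((hD1 true).sub (hD1 false)) measurable_const).inter
    ((measurableSet_eq_fun (hD2 true true) measurable_const).inter
      (measurableSet_eq_fun (hD2 false false) measurable_const))

lemma measurableSet_CAev (hD1 : ∀ z, Measurable (D1 z)) (hD2 : ∀ z d, Measurable (D2 z d)) :
    MeasurableSet (CAev D1 D2) :=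
  (measurableSet_eq_fun ((hD1 true).sub (hD1 false)) measurable_const).inter
    ((measurableSet_eq_fun (hD2 true true) measurable_const).inter
      (measurableSet_eq_fun (hD2 false false) measurable_const))

omit [MeasurableSpace Ω]

lemma disjoint_CCev_CNev : Disjoint (CCev D1 D2) (CNev D1 D2) := by
  rw [Set.disjoint_left]
  rintro ω ⟨-, hC⟩ ⟨-, htrue, hfalse⟩
  linarith

lemma disjoint_CCev_CAev : Disjoint (CCev D1 D2) (CAev D1 D2) := by
  rw [Set.disjoint_left]
  rintro ω ⟨-, hC⟩ ⟨-, htrue, hfalse⟩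
  linarith

lemma disjoint_CNev_CAev : Disjoint (CNev D1 D2) (CAev D1 D2) := by
  rw [Set.disjoint_left]
  rintro ω ⟨-, hN, -⟩ ⟨-, hA, -⟩
  linarith

lemma mem_CCev_union_CAev_iff (htrue : D2 true true ω = 0 ∨ D2 true true ω = 1)
    (hfalse : D2 false false ω = 0 ∨ D2 false false ω = 1) :
    ω ∈ CCev D1 D2 ∪ CAev D1 D2 ↔ D1 true ω - D1 false ω = 1 ∧ D2 true true ω = 1 := by
  rcases htrue with h | h <;> rcases hfalse with h' | h' <;>
    norm_num [CCev, CAev, h, h']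

lemma mem_CCev_union_CNev_iff (htrue : D2 true true ω = 0 ∨ D2 true true ω = 1)
    (hfalse : D2 false false ω = 0 ∨ D2 false false ω = 1) :
    ω ∈ CCev D1 D2 ∪ CNev D1 D2 ↔ D1 true ω - D1 false ω = 1 ∧ D2 false false ω = 0 := by
  rcases htrue with h | h <;> rcases hfalse with h' | h' <;>
    norm_num [CCev, CNev, h, h']

lemma mem_CCev_union_CNev_union_CAev_iff (hD1 : ∀ z, D1 z ω = 0 ∨ D1 z ω = 1)
    (htrue : D2 true true ω = 0 ∨ D2 true true ω = 1)
    (hfalse : D2 false false ω = 0 ∨ D2 false false ω = 1)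
    (hmono : D2 false true ω * D1 false ω + D2 false false ω * (1 - D1 false ω) ≤
      D2 true true ω * D1 true ω + D2 true false ω * (1 - D1 true ω)) :
    ω ∈ CCev D1 D2 ∪ CNev D1 D2 ∪ CAev D1 D2 ↔ D1 true ω - D1 false ω = 1 := by
  refine ⟨by rintro ((h | h) | h) <;> exact h.1, fun hC => ?_⟩
  have h1 : D1 true ω = 1 := by
    rcases hD1 true with h | h <;> rcases hD1 false with h' | h' <;> linarith
  have h0 : D1 false ω = 0 := by linarith
  have hle : D2 false false ω ≤ D2 true true ω := by simpa [h1, h0] using hmono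
  rcases sub_eq_zero_or_one_of_le hfalse htrue hle with hsub | hsub
  · have heq : D2 true true ω = D2 false false ω := sub_eq_zero.1 hsub
    rcases hfalse with h | h
    · exact .inl (.inr ⟨hC, heq.trans h, h⟩)
    · exact .inr ⟨hC, heq.trans h, h⟩
  · exact .inl (.inl ⟨hC, hsub⟩)

end Compliers

section Contrasts

variable {μ : Measure Ω} {Z : Ω → ℝ} {D1 : Bool → Ω → ℝ} {D2 : Bool → Bool → Ω → ℝ}
  {Yp : Bool → Bool → Bool → Ω → ℝ}

lemma integral_sub_mul_eq_setIntegral_CCev_union_CAev {V : Ω → ℝ}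
    (hD1 : ∀ z, Measurable (D1 z)) (hD2 : ∀ z d, Measurable (D2 z d))
    (hD101 : ∀ z ω, D1 z ω = 0 ∨ D1 z ω = 1) (hD201 : ∀ z d ω, D2 z d ω = 0 ∨ D2 z d ω = 1)
    (hmono1 : ∀ᵐ ω ∂μ, D1 false ω ≤ D1 true ω) :
    ∫ ω, (D1 true ω - D1 false ω) * (D2 true true ω * V ω) ∂μ =
      ∫ ω in CCev D1 D2 ∪ CAev D1 D2, V ω ∂μ := by
  rw [← integral_indicator ((measurableSet_CCev hD1 hD2).union (measurableSet_CAev hD1 hD2))]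
  refine integral_congr_ae ?_
  filter_upwards [hmono1] with ω hle
  have hmem := mem_CCev_union_CAev_iff (D1 := D1) (hD201 true true ω) (hD201 false false ω)
  rcases sub_eq_zero_or_one_of_le (hD101 false ω) (hD101 true ω) hle with h | h <;>
    rcases hD201 true true ω with h' | h' <;> simp [hmem, h, h']

lemma integral_sub_mul_one_sub_eq_setIntegral_CCev_union_CNev {V : Ω → ℝ}
    (hD1 : ∀ z, Measurable (D1 z)) (hD2 : ∀ z d, Measurable (D2 z d))
    (hD101 : ∀ z ω, D1 z ω = 0 ∨ D1 z ω = 1) (hD201 : ∀ z d ω, D2 z d ω = 0 ∨ D2 z d ω = 1)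
    (hmono1 : ∀ᵐ ω ∂μ, D1 false ω ≤ D1 true ω) :
    ∫ ω, (D1 true ω - D1 false ω) * ((1 - D2 false false ω) * V ω) ∂μ =
      ∫ ω in CCev D1 D2 ∪ CNev D1 D2, V ω ∂μ := by
  rw [← integral_indicator ((measurableSet_CCev hD1 hD2).union (measurableSet_CNev hD1 hD2))]
  refine integral_congr_ae ?_
  filter_upwards [hmono1] with ω hle
  have hmem := mem_CCev_union_CNev_iff (D1 := D1) (hD201 true true ω) (hD201 false false ω)
  rcases sub_eq_zero_or_one_of_le (hD101 false ω) (hD101 true ω) hle with h | h <;>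
    rcases hD201 false false ω with h' | h' <;> simp [hmem, h, h']

variable [IsFiniteMeasure μ]

lemma dE_eq_integral_sub_mul {A : Ω → ℝ} {P Q V : Bool → Ω → ℝ} (hZ : Measurable Z)
    (hZne : ∀ z : Bool, μ (Z ⁻¹' {(z.toNat : ℝ)}) ≠ 0)
    (hP : ∀ z, Measurable (P z)) (hQ : ∀ z, Measurable (Q z))
    (hP01 : ∀ z ω, P z ω = 0 ∨ P z ω = 1) (hQ01 : ∀ z ω, Q z ω = 0 ∨ Q z ω = 1)
    (hV : Integrable (V true) μ) (hexclQ : ∀ᵐ ω ∂μ, Q true ω = Q false ω)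
    (hexclV : ∀ᵐ ω ∂μ, V true ω = V false ω)
    (hindep : ∀ z, IndepFun (fun ω => P z ω * (Q z ω * V z ω)) Z μ)
    (hA : ∀ (z : Bool) ω, Z ω = z.toNat → A ω = P z ω * (Q z ω * V z ω)) (z₀ : Bool) :
    dE μ Z A = ∫ ω, (P true ω - P false ω) * (Q z₀ ω * V true ω) ∂μ := by
  have hVint (z : Bool) : Integrable (V z) μ := by
    cases z with
    | true => exact hV
    | false => exact hV.congr hexclV
  have hint (z : Bool) : Integrable (fun ω => P z ω * (Q z ω * V z ω)) μ :=
    integrable_mul_of_eq_zero_or_one (hP z).aestronglyMeasurable (hP01 z)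
      (integrable_mul_of_eq_zero_or_one (hQ z).aestronglyMeasurable (hQ01 z) (hVint z))
  rw [dE_eq_integral_sub hZ hZne hA hindep hint]
  refine integral_congr_ae ?_
  filter_upwards [hexclQ, hexclV] with ω hQeq hVeq
  cases z₀ <;> rw [hQeq, hVeq] <;> ring

lemma dE_obsD1 (hZ : Measurable Z) (hZne : ∀ z : Bool, μ (Z ⁻¹' {(z.toNat : ℝ)}) ≠ 0)
    (hD1 : ∀ z, Measurable (D1 z)) (hD2 : ∀ z d, Measurable (D2 z d))
    (hD101 : ∀ z ω, D1 z ω = 0 ∨ D1 z ω = 1) (hD201 : ∀ z d ω, D2 z d ω = 0 ∨ D2 z d ω = 1)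
    (hindep : ∀ z, IndepFun (D1 z) Z μ) (hmono1 : ∀ᵐ ω ∂μ, D1 false ω ≤ D1 true ω)
    (hmono2 : ∀ᵐ ω ∂μ,
      D2 false true ω * D1 false ω + D2 false false ω * (1 - D1 false ω) ≤
        D2 true true ω * D1 true ω + D2 true false ω * (1 - D1 true ω)) :
    dE μ Z (obsD1 Z D1) = μ.real (CCev D1 D2 ∪ CNev D1 D2 ∪ CAev D1 D2) := by
  have hint (z : Bool) : Integrable (D1 z) μ := by
    simpa using integrable_mul_of_eq_zero_or_one (hD1 z).aestronglyMeasurable (hD101 z)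
      (integrable_const (1 : ℝ))
  rw [dE_eq_integral_sub hZ hZne (fun _ _ => obsD1_of_eq_toNat) hindep hint,
    ← integral_indicator_one (((measurableSet_CCev hD1 hD2).union
      (measurableSet_CNev hD1 hD2)).union (measurableSet_CAev hD1 hD2))]
  refine integral_congr_ae ?_
  filter_upwards [hmono1, hmono2] with ω hle1 hle2
  have hmem := mem_CCev_union_CNev_union_CAev_iff (fun z => hD101 z ω) (hD201 true true ω)
    (hD201 false false ω) hle2
  rcases sub_eq_zero_or_one_of_le (hD101 false ω) (hD101 true ω) hle1 with h | h <;>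
    simp [hmem, h]

lemma dE_obsDand (hZ : Measurable Z) (hZne : ∀ z : Bool, μ (Z ⁻¹' {(z.toNat : ℝ)}) ≠ 0)
    (hD1 : ∀ z, Measurable (D1 z)) (hD2 : ∀ z d, Measurable (D2 z d))
    (hD101 : ∀ z ω, D1 z ω = 0 ∨ D1 z ω = 1) (hD201 : ∀ z d ω, D2 z d ω = 0 ∨ D2 z d ω = 1)
    (hindep : ∀ z, IndepFun (fun ω => D1 z ω * D2 z true ω) Z μ)
    (hmono1 : ∀ᵐ ω ∂μ, D1 false ω ≤ D1 true ω)
    (hexcl2 : ∀ᵐ ω ∂μ, D2 true true ω = D2 false true ω) :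
    dE μ Z (obsDand Z D1 D2) = μ.real (CCev D1 D2 ∪ CAev D1 D2) := by
  rw [← setIntegral_one_eq_measureReal,
    ← integral_sub_mul_eq_setIntegral_CCev_union_CAev hD1 hD2 hD101 hD201 hmono1]
  refine dE_eq_integral_sub_mul (V := fun _ _ => 1) hZ hZne hD1 (fun z => hD2 z true) hD101
    (fun z => hD201 z true) (integrable_const 1) hexcl2 (.of_forall fun _ => rfl)
    (by simpa only [mul_one] using hindep) (fun z ω hz => ?_) true
  rw [mul_one, obsDand_of_eq_toNat hz (hD101 z ω)]

lemma dE_obsDand_mul_obsY (hZ : Measurable Z)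
    (hZne : ∀ z : Bool, μ (Z ⁻¹' {(z.toNat : ℝ)}) ≠ 0)
    (hD1 : ∀ z, Measurable (D1 z)) (hD2 : ∀ z d, Measurable (D2 z d))
    (hD101 : ∀ z ω, D1 z ω = 0 ∨ D1 z ω = 1) (hD201 : ∀ z d ω, D2 z d ω = 0 ∨ D2 z d ω = 1)
    (hindep : ∀ z, IndepFun (fun ω => D1 z ω * (D2 z true ω * Yp z true true ω)) Z μ)
    (hY : Integrable (Yp true true true) μ) (hmono1 : ∀ᵐ ω ∂μ, D1 false ω ≤ D1 true ω)
    (hexcl2 : ∀ᵐ ω ∂μ, D2 true true ω = D2 false true ω)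
    (hexclY : ∀ᵐ ω ∂μ, Yp true true true ω = Yp false true true ω) :
    dE μ Z (fun ω => obsDand Z D1 D2 ω * obsY Z D1 D2 Yp ω) =
      ∫ ω in CCev D1 D2 ∪ CAev D1 D2, Yp true true true ω ∂μ := by
  rw [← integral_sub_mul_eq_setIntegral_CCev_union_CAev hD1 hD2 hD101 hD201 hmono1]
  exact dE_eq_integral_sub_mul (V := fun z => Yp z true true) hZ hZne hD1 (fun z => hD2 z true)
    hD101 (fun z => hD201 z true) hY hexcl2 hexclY hindep
    (fun z ω hz => obsDand_mul_obsY_of_eq_toNat hz (hD101 z ω) (hD201 z true ω)) true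

lemma dE_one_sub_obsD1_mul_one_sub_obsD2_mul_obsY (hZ : Measurable Z)
    (hZne : ∀ z : Bool, μ (Z ⁻¹' {(z.toNat : ℝ)}) ≠ 0)
    (hD1 : ∀ z, Measurable (D1 z)) (hD2 : ∀ z d, Measurable (D2 z d))
    (hD101 : ∀ z ω, D1 z ω = 0 ∨ D1 z ω = 1) (hD201 : ∀ z d ω, D2 z d ω = 0 ∨ D2 z d ω = 1)
    (hindep : ∀ z,
      IndepFun (fun ω => (1 - D1 z ω) * ((1 - D2 z false ω) * Yp z false false ω)) Z μ)
    (hY : Integrable (Yp true false false) μ) (hmono1 : ∀ᵐ ω ∂μ, D1 false ω ≤ D1 true ω)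
    (hexcl2 : ∀ᵐ ω ∂μ, D2 true false ω = D2 false false ω)
    (hexclY : ∀ᵐ ω ∂μ, Yp true false false ω = Yp false false false ω) :
    dE μ Z (fun ω => (1 - obsD1 Z D1 ω) * (1 - obsD2 Z D1 D2 ω) * obsY Z D1 D2 Yp ω) =
      -∫ ω in CCev D1 D2 ∪ CNev D1 D2, Yp true false false ω ∂μ := by
  rw [dE_eq_integral_sub_mul (P := fun z ω => 1 - D1 z ω) (Q := fun z ω => 1 - D2 z false ω)
      (V := fun z => Yp z false false) hZ hZne (fun z => (hD1 z).const_sub 1)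
      (fun z => (hD2 z false).const_sub 1) (fun z ω => one_sub_eq_zero_or_one (hD101 z ω))
      (fun z ω => one_sub_eq_zero_or_one (hD201 z false ω)) hY
      (hexcl2.mono fun _ h => congrArg (1 - ·) h) hexclY hindep
      (fun z ω hz => one_sub_obsD1_mul_one_sub_obsD2_mul_obsY_of_eq_toNat hz (hD101 z ω)
        (hD201 z false ω)) false,
    ← integral_sub_mul_one_sub_eq_setIntegral_CCev_union_CNev hD1 hD2 hD101 hD201 hmono1,
    ← integral_neg]
  congr with ω
  ring

end Contrasts

theorem stmt_12_general
    (μ : Measure Ω) [IsProbabilityMeasure μ]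
    (Z : Ω → ℝ) (D1 : Bool → Ω → ℝ) (D2 : Bool → Bool → Ω → ℝ)
    (Yp : Bool → Bool → Bool → Ω → ℝ)
    (hZmeas : Measurable Z)
    (hD1meas : ∀ b, Measurable (D1 b))
    (hD2meas : ∀ b b', Measurable (D2 b b'))
    (hYint : ∀ d, Integrable (Yp true d d) μ)
    (hZ01 : ∀ ω, Z ω = 0 ∨ Z ω = 1)
    (hZpos : 0 < μ (Z ⁻¹' {1})) (hZlt : μ (Z ⁻¹' {1}) < 1)
    (hD101 : ∀ b ω, D1 b ω = 0 ∨ D1 b ω = 1)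
    (hD201 : ∀ b b' ω, D2 b b' ω = 0 ∨ D2 b b' ω = 1)
    (hindep : IndepFun
      (fun ω => ((fun b => D1 b ω), (fun b b' => D2 b b' ω), (fun z d1 d2 => Yp z d1 d2 ω))) Z μ)
    (hrelAnd : 0 < dE μ Z (obsDand Z D1 D2))
    (hmono1 : ∀ᵐ ω ∂μ, D1 false ω ≤ D1 true ω)
    (hmono2 : ∀ᵐ ω ∂μ,
      D2 false true ω * D1 false ω + D2 false false ω * (1 - D1 false ω) ≤
        D2 true true ω * D1 true ω + D2 true false ω * (1 - D1 true ω))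
    (hexcl : ∀ d, ∀ᵐ ω ∂μ, Yp true d d ω = Yp false d d ω)
    (hdexcl : ∀ d1, ∀ᵐ ω ∂μ, D2 true d1 ω = D2 false d1 ω)
    (hpos : 0 ≤ ∫ ω in CAev D1 D2, Yp true false false ω ∂μ)
    (hmts1 : μ.real (CAev D1 D2) * ∫ ω in CNev D1 D2, Yp true true true ω ∂μ ≤
      μ.real (CNev D1 D2) * ∫ ω in CAev D1 D2, Yp true true true ω ∂μ)
    (hmts2 : μ.real (CCev D1 D2) * ∫ ω in CNev D1 D2, Yp true true true ω ∂μ ≤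
      μ.real (CNev D1 D2) * ∫ ω in CCev D1 D2, Yp true true true ω ∂μ) :
    μ.real (CCev D1 D2 ∪ CNev D1 D2 ∪ CAev D1 D2) = dE μ Z (obsD1 Z D1) ∧
    (∫ ω in CCev D1 D2 ∪ CNev D1 D2 ∪ CAev D1 D2,
        (Yp true true true ω - Yp true false false ω) ∂μ) /
        μ.real (CCev D1 D2 ∪ CNev D1 D2 ∪ CAev D1 D2) ≤
      dE μ Z (fun ω => obsDand Z D1 D2 ω * obsY Z D1 D2 Yp ω) / dE μ Z (obsDand Z D1 D2) +
        dE μ Z (fun ω => (1 - obsD1 Z D1 ω) * (1 - obsD2 Z D1 D2 ω) * obsY Z D1 D2 Yp ω) /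
          dE μ Z (obsD1 Z D1) := by
  have hZne := measure_preimage_toNat_ne_zero hZmeas hZ01 hZpos hZlt
  have hindep_comp {φ : (Bool → ℝ) × (Bool → Bool → ℝ) × (Bool → Bool → Bool → ℝ) → ℝ}
      (hφ : Measurable φ) := hindep.comp hφ measurable_id
  have hD1 := dE_obsD1 hZmeas hZne hD1meas hD2meas hD101 hD201
    (fun z => hindep_comp (φ := fun w => w.1 z) (by fun_prop)) hmono1 hmono2
  have hDand := dE_obsDand hZmeas hZne hD1meas hD2meas hD101 hD201
    (fun z => hindep_comp (φ := fun w => w.1 z * w.2.1 z true) (by fun_prop)) hmono1 (hdexcl true)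
  have hDandY := dE_obsDand_mul_obsY hZmeas hZne hD1meas hD2meas hD101 hD201
    (fun z => hindep_comp (φ := fun w => w.1 z * (w.2.1 z true * w.2.2 z true true)) (by fun_prop))
    (hYint true) hmono1 (hdexcl true) (hexcl true)
  have hNorY := dE_one_sub_obsD1_mul_one_sub_obsD2_mul_obsY hZmeas hZne hD1meas hD2meas hD101 hD201
    (fun z => hindep_comp
      (φ := fun w => (1 - w.1 z) * ((1 - w.2.1 z false) * w.2.2 z false false)) (by fun_prop))
    (hYint false) hmono1 (hdexcl false) (hexcl false)
  refine ⟨hD1.symm, ?_⟩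
  rw [hDandY, hNorY, hDand, hD1]
  exact setIntegral_union_sub_div_le disjoint_CCev_CNev disjoint_CCev_CAev disjoint_CNev_CAev
    (measurableSet_CNev hD1meas hD2meas) (measurableSet_CAev hD1meas hD2meas) (hYint true)
    (hYint false) (hDand ▸ hrelAnd) hpos hmts2 hmts1

theorem stmt_12
    (μ : Measure Ω) [IsProbabilityMeasure μ]
    (Z : Ω → ℝ) (D1 : Bool → Ω → ℝ) (D2 : Bool → Bool → Ω → ℝ)
    (Yp : Bool → Bool → Bool → Ω → ℝ)
    (hZmeas : Measurable Z)
    (hD1meas : ∀ b, Measurable (D1 b))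
    (hD2meas : ∀ b b', Measurable (D2 b b'))
    (hYmeas : ∀ z d1 d2, Measurable (Yp z d1 d2))
    (hYint : ∀ z d1 d2, Integrable (Yp z d1 d2) μ)
    (hZ01 : ∀ ω, Z ω = 0 ∨ Z ω = 1)
    (hZpos : 0 < μ (Z ⁻¹' {1})) (hZlt : μ (Z ⁻¹' {1}) < 1)
    (hD101 : ∀ b ω, D1 b ω = 0 ∨ D1 b ω = 1)
    (hD201 : ∀ b b' ω, D2 b b' ω = 0 ∨ D2 b b' ω = 1)
    (hindep : IndepFun
      (fun ω => ((fun b => D1 b ω), (fun b b' => D2 b b' ω), (fun z d1 d2 => Yp z d1 d2 ω))) Z μ)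
    (hrel1 : 0 < dE μ Z (obsD1 Z D1))
    (hrel2 : 0 < dE μ Z (obsD2 Z D1 D2))
    (hrelAnd : 0 < dE μ Z (obsDand Z D1 D2))
    (hrelOr : 0 < dE μ Z (obsDor Z D1 D2))
    (hmono1 : ∀ᵐ ω ∂μ, D1 false ω ≤ D1 true ω)
    (hmono2 : ∀ᵐ ω ∂μ,
      D2 false true ω * D1 false ω + D2 false false ω * (1 - D1 false ω) ≤
        D2 true true ω * D1 true ω + D2 true false ω * (1 - D1 true ω))
    (hexcl : ∀ d1 d2, ∀ᵐ ω ∂μ, Yp true d1 d2 ω = Yp false d1 d2 ω)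
    (hdexcl : ∀ d1, ∀ᵐ ω ∂μ, D2 true d1 ω = D2 false d1 ω)
    (hpos : 0 ≤ ∫ ω in CAev D1 D2, Yp true false false ω ∂μ)
    (hmtr1 : 0 ≤ ∫ ω in CNev D1 D2, (Yp true true true ω - Yp true true false ω) ∂μ)
    (hmtr2 : 0 ≤ ∫ ω in CAev D1 D2, (Yp true false true ω - Yp true false false ω) ∂μ)
    (hmts1 : (μ (CAev D1 D2)).toReal * ∫ ω in CNev D1 D2, Yp true true true ω ∂μ ≤
      (μ (CNev D1 D2)).toReal * ∫ ω in CAev D1 D2, Yp true true true ω ∂μ)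
    (hmts2 : (μ (CCev D1 D2)).toReal * ∫ ω in CNev D1 D2, Yp true true true ω ∂μ ≤
      (μ (CNev D1 D2)).toReal * ∫ ω in CCev D1 D2, Yp true true true ω ∂μ) :
    (μ (CCev D1 D2 ∪ CNev D1 D2 ∪ CAev D1 D2)).toReal = dE μ Z (obsD1 Z D1) ∧
    (∫ ω in CCev D1 D2 ∪ CNev D1 D2 ∪ CAev D1 D2, (Yp true true true ω - Yp true false false ω) ∂μ) /
        (μ (CCev D1 D2 ∪ CNev D1 D2 ∪ CAev D1 D2)).toReal ≤
      dE μ Z (fun ω => obsDand Z D1 D2 ω * obsY Z D1 D2 Yp ω) / dE μ Z (obsDand Z D1 D2) +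
        dE μ Z (fun ω => (1 - obsD1 Z D1 ω) * (1 - obsD2 Z D1 D2 ω) * obsY Z D1 D2 Yp ω) /
          dE μ Z (obsD1 Z D1) :=
  stmt_12_general μ Z D1 D2 Yp hZmeas hD1meas hD2meas (fun d => hYint true d d) hZ01 hZpos hZlt
    hD101 hD201 hindep hrelAnd hmono1 hmono2 (fun d => hexcl d d) hdexcl hpos hmts1 hmts2
end
end

section
/- (Upper bound on the LAFTE under bounded response) Under Independence, Relevance, Monotonicity, the Double exclusion restriction, and the bounded response condition that for all d1,d2 ∈ {0,1} the potential outcome satisfies Ymin ≤ Y(d1,d2) ≤ Ymax almost surely (for real constants Ymin ≤ Ymax), it holds that E[Y(1,1)−Y(0,0) | C] ≤ [ΔE[(1−D1−D2+2·D1·D2)·Y|Z] + Ymax·ΔE[D∨−D2|Z] − Ymin·ΔE[D∧−D2|Z]] / ΔE[D1|Z], where C := {C1,C2} ∪ {C1,N2} ∪ {C1,A2} satisfies μ(C) = ΔE[D1|Z] > 0. (Corollary 3, upper bound) -/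
open MeasureTheory ProbabilityTheory

noncomputable section

variable {Ω : Type*} [MeasurableSpace Ω]

/-! On compliers of the first treatment the instrument moves `D1` from `0` to `1`; everybody else
keeps both treatments, by double exclusion. Replace the outcome of units with `(D1, D2) = (1, 0)`
by `Ymax` and of those with `(D1, D2) = (0, 1)` by `Ymin`. The imputed outcome is at least
`Y(1, 1)` when `D1 = 1` and at most `Y(0, 0)` when `D1 = 0`, so the effect of the instrument on it
dominates `Y(1, 1) − Y(0, 0)` on compliers and vanishes elsewhere. By independence the mean of this
effect is `ΔE` of the observed imputed outcome, which is the numerator of the bound: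
`1 − D1 − D2 + 2·D1·D2`, `D∨ − D2` and `D2 − D∧` are the indicators of `D1 = D2`, of `(1, 0)` and
of `(0, 1)`. -/

section Conditioning

variable {μ : Measure Ω} {E : Type*} [MeasurableSpace E]

lemma identDistrib_cond_of_indepFun {F : Type*} [MeasurableSpace F] [IsFiniteMeasure μ]
    {X : Ω → E} {Z : Ω → F} {t : Set F} (hX : AEMeasurable X μ) (hZ : Measurable Z)
    (hind : IndepFun X Z μ) (ht : MeasurableSet t) (hμt : μ (Z ⁻¹' t) ≠ 0) :
    IdentDistrib X X (μ[|Z ⁻¹' t]) μ where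
  aemeasurable_fst := hX.mono_ac cond_absolutelyContinuous
  aemeasurable_snd := hX
  map_eq := by
    ext s hs
    rw [Measure.map_apply_of_aemeasurable (hX.mono_ac cond_absolutelyContinuous) hs,
      Measure.map_apply_of_aemeasurable hX hs, cond_apply (hZ ht), Set.inter_comm,
      hind.measure_inter_preimage_eq_mul _ _ hs ht, mul_comm (μ (X ⁻¹' s)),
      ENNReal.inv_mul_cancel_left hμt (measure_ne_top μ _)]

lemma integral_cond_singleton_of_indepFun [MeasurableSingletonClass E] [IsFiniteMeasure μ]
    {G : Type*} [NormedAddCommGroup G] [NormedSpace ℝ G] [MeasurableSpace G] [BorelSpace G]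
    {Z : Ω → E} {B : E → Ω → G} {z : E} (hZ : Measurable Z) (hB : AEMeasurable (B z) μ)
    (hind : IndepFun (B z) Z μ) (hz : μ (Z ⁻¹' {z}) ≠ 0) :
    ∫ ω, B (Z ω) ω ∂(μ[|Z ⁻¹' {z}]) = ∫ ω, B z ω ∂μ :=
  calc ∫ ω, B (Z ω) ω ∂(μ[|Z ⁻¹' {z}])
      = ∫ ω, B z ω ∂(μ[|Z ⁻¹' {z}]) := by
        refine integral_congr_ae ?_
        filter_upwards [ae_cond_mem (hZ (measurableSet_singleton z))] with ω hω
        rw [show Z ω = z from hω]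
    _ = ∫ ω, B z ω ∂μ :=
        (identDistrib_cond_of_indepFun hB hZ hind (measurableSet_singleton z) hz).integral_eq

lemma integrable_cond {G : Type*} [NormedAddCommGroup G] {f : Ω → G} (hf : Integrable f μ)
    (s : Set Ω) : Integrable f (μ[|s]) := by
  by_cases hs : μ s = 0
  · rw [cond_eq_zero_of_meas_eq_zero hs]
    exact integrable_zero_measure
  · exact hf.restrict.smul_measure (ENNReal.inv_ne_top.mpr hs)

variable {Z : Ω → ℝ}

lemma dE_add {A B : Ω → ℝ} (hA : Integrable A μ) (hB : Integrable B μ) :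
    dE μ Z (fun ω => A ω + B ω) = dE μ Z A + dE μ Z B := by
  simp only [dE, integral_add (integrable_cond hA _) (integrable_cond hB _)]
  ring

lemma dE_const_mul (c : ℝ) (A : Ω → ℝ) : dE μ Z (fun ω => c * A ω) = c * dE μ Z A := by
  simp only [dE, integral_const_mul, mul_sub]

lemma dE_eq_integral_sub_integral [IsFiniteMeasure μ] {B : ℝ → Ω → ℝ} (hZ : Measurable Z)
    (hZ0 : μ (Z ⁻¹' {0}) ≠ 0) (hZ1 : μ (Z ⁻¹' {1}) ≠ 0)
    (hB0 : AEMeasurable (B 0) μ) (hB1 : AEMeasurable (B 1) μ)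
    (hind0 : IndepFun (B 0) Z μ) (hind1 : IndepFun (B 1) Z μ) :
    dE μ Z (fun ω => B (Z ω) ω) = ∫ ω, B 1 ω ∂μ - ∫ ω, B 0 ω ∂μ := by
  rw [dE, integral_cond_singleton_of_indepFun hZ hB1 hind1 hZ1,
    integral_cond_singleton_of_indepFun hZ hB0 hind0 hZ0]

end Conditioning

/-- A `{0, 1}`-valued random variable, such as a binary instrument or treatment. -/
structure IsBinary (f : Ω → ℝ) : Prop where
  measurable : Measurable f
  eq_zero_or_one : ∀ ω, f ω = 0 ∨ f ω = 1

namespace IsBinary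

variable {μ : Measure Ω} {f g h : Ω → ℝ}

lemma const {c : ℝ} (hc : c = 0 ∨ c = 1) : IsBinary (fun _ : Ω => c) :=
  ⟨measurable_const, fun _ => hc⟩

lemma one_sub (hf : IsBinary f) : IsBinary (fun ω => 1 - f ω) where
  measurable := hf.measurable.const_sub 1
  eq_zero_or_one ω := by rcases hf.eq_zero_or_one ω with hω | hω <;> simp [hω]

lemma mul (hf : IsBinary f) (hg : IsBinary g) : IsBinary (fun ω => f ω * g ω) where
  measurable := hf.measurable.mul hg.measurable
  eq_zero_or_one ω := by rcases hf.eq_zero_or_one ω with hω | hω <;> simp [hω, hg.eq_zero_or_one ω]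

lemma mul_add_mul_one_sub (hf : IsBinary f) (hg : IsBinary g) (hh : IsBinary h) :
    IsBinary (fun ω => f ω * h ω + g ω * (1 - h ω)) where
  measurable := (hf.mul hh).measurable.add (hg.mul hh.one_sub).measurable
  eq_zero_or_one ω := by
    rcases hh.eq_zero_or_one ω with hω | hω <;>
      simp [hω, hf.eq_zero_or_one ω, hg.eq_zero_or_one ω]

lemma norm_le_one (hf : IsBinary f) (ω : Ω) : ‖f ω‖ ≤ 1 := by
  rcases hf.eq_zero_or_one ω with hω | hω <;> simp [hω]

lemma integrable [IsFiniteMeasure μ] (hf : IsBinary f) : Integrable f μ :=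
  .of_bound hf.measurable.aestronglyMeasurable 1 (ae_of_all μ hf.norm_le_one)

lemma integrable_mul (hf : IsBinary f) (hg : Integrable g μ) :
    Integrable (fun ω => g ω * f ω) μ :=
  hg.mul_bdd (c := 1) hf.measurable.aestronglyMeasurable (ae_of_all μ hf.norm_le_one)

lemma measure_preimage_zero_ne_zero [IsProbabilityMeasure μ] (hf : IsBinary f)
    (hlt : μ (f ⁻¹' {1}) < 1) : μ (f ⁻¹' {0}) ≠ 0 := by
  have hcompl : f ⁻¹' {0} = (f ⁻¹' {1})ᶜ := by
    ext ω
    rcases hf.eq_zero_or_one ω with hω | hω <;> simp [hω]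
  rw [hcompl, Ne, prob_compl_eq_zero_iff (hf.measurable (measurableSet_singleton 1))]
  exact hlt.ne

lemma sub_eq_one_iff (hf : IsBinary f) (hg : IsBinary g) (ω : Ω) :
    f ω - g ω = 1 ↔ f ω = 1 ∧ g ω = 0 := by
  rcases hf.eq_zero_or_one ω with hfω | hfω <;> rcases hg.eq_zero_or_one ω with hgω | hgω <;>
    norm_num [hfω, hgω]

end IsBinary

/-- The values taken by the potential treatments `D1(z)`, `D2(z, d1)` and outcomes `Y(z, d1, d2)`
at a single sample point. -/
abbrev PotentialValues : Type := (Bool → ℝ) × (Bool → Bool → ℝ) × (Bool → Bool → Bool → ℝ)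

/-- The random vector of all potential treatments and outcomes, whose independence of the instrument
is the independence assumption. -/
def potentials (D1 : Bool → Ω → ℝ) (D2 : Bool → Bool → Ω → ℝ) (Yp : Bool → Bool → Bool → Ω → ℝ)
    (ω : Ω) : PotentialValues :=
  (fun b => D1 b ω, fun b b' => D2 b b' ω, fun z d1 d2 => Yp z d1 d2 ω)

/-- The potential outcomes with `Y(1, 0)` replaced by `hi` and `Y(0, 1)` replaced by `lo`, the
worst case for the upper bound on the effect of joint treatment. -/
def imputedY (lo hi : ℝ) (Yp : Bool → Bool → Bool → Ω → ℝ) (z : Bool) : Bool → Bool → Ω → ℝ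
  | true, true => Yp z true true
  | false, false => Yp z false false
  | true, false => fun _ => hi
  | false, true => fun _ => lo

/-- The event `D1(1) − D1(0) = 1` of compliers of the first treatment. -/
def firstCompliers (D1 : Bool → Ω → ℝ) : Set Ω :=
  {ω | D1 true ω - D1 false ω = 1}

section Observed

variable {μ : Measure Ω} {Z : Ω → ℝ} {D1 : Bool → Ω → ℝ} {D2 : Bool → Bool → Ω → ℝ}
  {Yp : Bool → Bool → Bool → Ω → ℝ} {lo hi : ℝ}

lemma measurable_obsD1 (hZ : Measurable Z) (hD1 : ∀ b, Measurable (D1 b)) :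
    Measurable (obsD1 Z D1) := by
  unfold obsD1
  fun_prop

lemma measurable_obsD2 (hZ : Measurable Z) (hD1 : ∀ b, Measurable (D1 b))
    (hD2 : ∀ b b', Measurable (D2 b b')) : Measurable (obsD2 Z D1 D2) := by
  have := measurable_obsD1 hZ hD1
  unfold obsD2
  fun_prop

lemma measurable_obsY (hZ : Measurable Z) (hD1 : ∀ b, Measurable (D1 b))
    (hD2 : ∀ b b', Measurable (D2 b b')) (hY : ∀ z d1 d2, Measurable (Yp z d1 d2)) :
    Measurable (obsY Z D1 D2 Yp) := by
  have := measurable_obsD1 hZ hD1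
  have := measurable_obsD2 hZ hD1 hD2
  unfold obsY
  fun_prop

lemma isBinary_obsD1 (hZ : IsBinary Z) (hD1 : ∀ b, IsBinary (D1 b)) : IsBinary (obsD1 Z D1) :=
  (hD1 true).mul_add_mul_one_sub (hD1 false) hZ

lemma isBinary_obsD2 (hZ : IsBinary Z) (hD1 : ∀ b, IsBinary (D1 b))
    (hD2 : ∀ b b', IsBinary (D2 b b')) : IsBinary (obsD2 Z D1 D2) :=
  have hassigned (z : Bool) :=
    (hD2 z true).mul_add_mul_one_sub (hD2 z false) (isBinary_obsD1 hZ hD1)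
  (hassigned true).mul_add_mul_one_sub (hassigned false) hZ

lemma integrable_obsY (hZ : IsBinary Z) (hD1 : ∀ b, IsBinary (D1 b))
    (hD2 : ∀ b b', IsBinary (D2 b b')) (hY : ∀ z d1 d2, Integrable (Yp z d1 d2) μ) :
    Integrable (obsY Z D1 D2 Yp) μ := by
  have hd1 := isBinary_obsD1 hZ hD1
  have hd2 := isBinary_obsD2 hZ hD1 hD2
  have hassigned (z : Bool) :=
    (((hd2.integrable_mul (hd1.integrable_mul (hY z true true))).add
      (hd2.integrable_mul (hd1.one_sub.integrable_mul (hY z false true)))).add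
      (hd2.one_sub.integrable_mul (hd1.integrable_mul (hY z true false)))).add
      (hd2.one_sub.integrable_mul (hd1.one_sub.integrable_mul (hY z false false)))
  exact (hZ.integrable_mul (hassigned true)).add (hZ.one_sub.integrable_mul (hassigned false))

lemma integrable_imputedY [IsFiniteMeasure μ] (hY : ∀ z d, Integrable (Yp z d d) μ)
    (z d1 d2 : Bool) : Integrable (imputedY lo hi Yp z d1 d2) μ := by
  cases d1 <;> cases d2
  exacts [hY z false, integrable_const lo, integrable_const hi, hY z true]

lemma indepFun_potentials_imputedY (hind : IndepFun (potentials D1 D2 Yp) Z μ) :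
    IndepFun (potentials D1 D2 (imputedY lo hi Yp)) Z μ := by
  let impute : PotentialValues → PotentialValues :=
    potentials (fun b v => v.1 b) (fun b b' v => v.2.1 b b')
      (imputedY lo hi fun z d1 d2 v => v.2.2 z d1 d2)
  have himpute : Measurable impute := by
    refine measurable_fst.prodMk (measurable_snd.fst.prodMk ?_)
    refine measurable_pi_lambda _ fun z => measurable_pi_lambda _ fun d1 =>
      measurable_pi_lambda _ fun d2 => ?_
    cases d1 <;> cases d2 <;> simp only [imputedY] <;> fun_prop
  have hcomp : potentials D1 D2 (imputedY lo hi Yp) = impute ∘ potentials D1 D2 Yp := by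
    funext ω
    refine Prod.ext rfl (Prod.ext rfl ?_)
    funext z d1 d2
    cases d1 <;> cases d2 <;> rfl
  rw [hcomp]
  exact hind.comp himpute measurable_id

lemma indepFun_obsD1 (hind : IndepFun (potentials D1 D2 Yp) Z μ) (z : ℝ) :
    IndepFun (obsD1 (fun _ => z) D1) Z μ := by
  have hmeas : Measurable (obsD1 (fun _ => z) fun b (v : PotentialValues) => v.1 b) :=
    measurable_obsD1 measurable_const (by fun_prop)
  exact hind.comp hmeas measurable_id

lemma indepFun_obsY (hind : IndepFun (potentials D1 D2 Yp) Z μ) (z : ℝ) :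
    IndepFun (obsY (fun _ => z) D1 D2 Yp) Z μ := by
  have hmeas : Measurable (obsY (fun _ => z) (fun b (v : PotentialValues) => v.1 b)
      (fun b b' v => v.2.1 b b') (fun z d1 d2 v => v.2.2 z d1 d2)) :=
    measurable_obsY measurable_const (by fun_prop) (by fun_prop) (by fun_prop)
  exact hind.comp hmeas measurable_id

lemma dE_obsD1_s14 [IsFiniteMeasure μ] (hZ : Measurable Z) (hZ0 : μ (Z ⁻¹' {0}) ≠ 0)
    (hZ1 : μ (Z ⁻¹' {1}) ≠ 0) (hD1 : ∀ b, Measurable (D1 b))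
    (hind : IndepFun (potentials D1 D2 Yp) Z μ) :
    dE μ Z (obsD1 Z D1) = ∫ ω, D1 true ω ∂μ - ∫ ω, D1 false ω ∂μ := by
  have hmeas (z : ℝ) : AEMeasurable (obsD1 (fun _ => z) D1) μ :=
    (measurable_obsD1 measurable_const hD1).aemeasurable
  calc dE μ Z (obsD1 Z D1)
      = ∫ ω, obsD1 (fun _ => 1) D1 ω ∂μ - ∫ ω, obsD1 (fun _ => 0) D1 ω ∂μ :=
        dE_eq_integral_sub_integral (B := fun z => obsD1 (fun _ => z) D1) hZ hZ0 hZ1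
          (hmeas 0) (hmeas 1) (indepFun_obsD1 hind 0) (indepFun_obsD1 hind 1)
    _ = ∫ ω, D1 true ω ∂μ - ∫ ω, D1 false ω ∂μ := by simp [obsD1]

lemma dE_obsY [IsFiniteMeasure μ] (hZ : Measurable Z) (hZ0 : μ (Z ⁻¹' {0}) ≠ 0)
    (hZ1 : μ (Z ⁻¹' {1}) ≠ 0) (hD1 : ∀ b, IsBinary (D1 b)) (hD2 : ∀ b b', IsBinary (D2 b b'))
    (hY : ∀ z d1 d2, Integrable (Yp z d1 d2) μ) (hind : IndepFun (potentials D1 D2 Yp) Z μ) :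
    dE μ Z (obsY Z D1 D2 Yp) =
      ∫ ω, (obsY (fun _ => 1) D1 D2 Yp ω - obsY (fun _ => 0) D1 D2 Yp ω) ∂μ := by
  have hint0 := integrable_obsY (.const (.inl rfl)) hD1 hD2 hY
  have hint1 := integrable_obsY (.const (.inr rfl)) hD1 hD2 hY
  rw [integral_sub hint1 hint0]
  exact dE_eq_integral_sub_integral (B := fun z => obsY (fun _ => z) D1 D2 Yp) hZ hZ0 hZ1
    hint0.aemeasurable hint1.aemeasurable (indepFun_obsY hind 0) (indepFun_obsY hind 1)

lemma matched_mul_obsY_eq (hZ : IsBinary Z) (hD1 : ∀ b, IsBinary (D1 b))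
    (hD2 : ∀ b b', IsBinary (D2 b b')) (ω : Ω) :
    (1 - obsD1 Z D1 ω - obsD2 Z D1 D2 ω + 2 * obsD1 Z D1 ω * obsD2 Z D1 D2 ω) *
        obsY Z D1 D2 Yp ω =
      obsY Z D1 D2 (imputedY lo hi Yp) ω + (-hi * (obsDor Z D1 D2 ω - obsD2 Z D1 D2 ω) +
        lo * (obsDand Z D1 D2 ω - obsD2 Z D1 D2 ω)) := by
  rcases (isBinary_obsD1 hZ hD1).eq_zero_or_one ω with hd1 | hd1 <;>
    rcases (isBinary_obsD2 hZ hD1 hD2).eq_zero_or_one ω with hd2 | hd2 <;>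
    simp only [obsY, imputedY, obsDor, obsDand, hd1, hd2] <;> ring

lemma dE_obsY_imputedY [IsFiniteMeasure μ] (hZ : IsBinary Z) (hD1 : ∀ b, IsBinary (D1 b))
    (hD2 : ∀ b b', IsBinary (D2 b b')) (hY : ∀ z d, Integrable (Yp z d d) μ) :
    dE μ Z (obsY Z D1 D2 (imputedY lo hi Yp)) =
      dE μ Z (fun ω =>
        (1 - obsD1 Z D1 ω - obsD2 Z D1 D2 ω + 2 * obsD1 Z D1 ω * obsD2 Z D1 D2 ω) *
          obsY Z D1 D2 Yp ω) +
        hi * dE μ Z (fun ω => obsDor Z D1 D2 ω - obsD2 Z D1 D2 ω) -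
        lo * dE μ Z (fun ω => obsDand Z D1 D2 ω - obsD2 Z D1 D2 ω) := by
  have hd1 := isBinary_obsD1 hZ hD1
  have hd2 := isBinary_obsD2 hZ hD1 hD2
  have hand : Integrable (obsDand Z D1 D2) μ := (hd1.mul hd2).integrable
  have hor : Integrable (obsDor Z D1 D2) μ := (hd1.integrable.add hd2.integrable).sub hand
  have hhi : Integrable (fun ω => -hi * (obsDor Z D1 D2 ω - obsD2 Z D1 D2 ω)) μ :=
    (hor.sub hd2.integrable).const_mul (-hi)
  have hlo : Integrable (fun ω => lo * (obsDand Z D1 D2 ω - obsD2 Z D1 D2 ω)) μ :=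
    (hand.sub hd2.integrable).const_mul lo
  simp_rw [matched_mul_obsY_eq (lo := lo) (hi := hi) hZ hD1 hD2]
  rw [dE_add (integrable_obsY hZ hD1 hD2 (integrable_imputedY hY)) (hhi.fun_add hlo),
    dE_add hhi hlo, dE_const_mul, dE_const_mul]
  ring

end Observed

section Compliers

variable {μ : Measure Ω} {D1 : Bool → Ω → ℝ} {D2 : Bool → Bool → Ω → ℝ}
  {Yp : Bool → Bool → Bool → Ω → ℝ} {lo hi : ℝ}

lemma measurableSet_firstCompliers (hD1 : ∀ b, Measurable (D1 b)) :
    MeasurableSet (firstCompliers D1) :=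
  ((hD1 true).sub (hD1 false)) (measurableSet_singleton 1)

lemma indicator_firstCompliers {ω : Ω} (hD1 : ∀ b, IsBinary (D1 b))
    (hmono : D1 false ω ≤ D1 true ω) :
    (firstCompliers D1).indicator 1 ω = D1 true ω - D1 false ω := by
  revert hmono
  rcases (hD1 true).eq_zero_or_one ω with h1 | h1 <;>
    rcases (hD1 false).eq_zero_or_one ω with h0 | h0 <;>
    norm_num [firstCompliers, Set.indicator_apply, h0, h1]

lemma measureReal_firstCompliers [IsFiniteMeasure μ] (hD1 : ∀ b, IsBinary (D1 b))
    (hmono : ∀ᵐ ω ∂μ, D1 false ω ≤ D1 true ω) :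
    μ.real (firstCompliers D1) = ∫ ω, D1 true ω ∂μ - ∫ ω, D1 false ω ∂μ := by
  rw [← integral_indicator_one (measurableSet_firstCompliers fun b => (hD1 b).measurable),
    ← integral_sub (hD1 true).integrable (hD1 false).integrable]
  refine integral_congr_ae ?_
  filter_upwards [hmono] with ω hω
  exact indicator_firstCompliers hD1 hω

lemma union_complier_events_ae_eq_firstCompliers (hD1 : ∀ b, IsBinary (D1 b))
    (hD2 : ∀ b b', IsBinary (D2 b b'))
    (hmono : ∀ᵐ ω ∂μ,
      D2 false true ω * D1 false ω + D2 false false ω * (1 - D1 false ω) ≤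
        D2 true true ω * D1 true ω + D2 true false ω * (1 - D1 true ω)) :
    (CCev D1 D2 ∪ CNev D1 D2 ∪ CAev D1 D2 : Set Ω) =ᵐ[μ] firstCompliers D1 := by
  refine Filter.eventuallyEq_set.mpr ?_
  filter_upwards [hmono] with ω hω
  refine ⟨by rintro ((h | h) | h) <;> exact h.1, fun hC => ?_⟩
  obtain ⟨h1, h0⟩ := ((hD1 true).sub_eq_one_iff (hD1 false) ω).mp hC
  have hD2mono : D2 false false ω ≤ D2 true true ω := by simpa [h0, h1] using hω
  revert hD2mono
  rcases (hD2 true true).eq_zero_or_one ω with ht | ht <;>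
    rcases (hD2 false false).eq_zero_or_one ω with hf | hf <;>
    norm_num [CCev, CNev, CAev, h0, h1, ht, hf]

lemma le_obsY_imputedY_of_treated {ω : Ω} (hD2 : IsBinary (D2 true true))
    (h1 : D1 true ω = 1) (hhi : Yp true true true ω ≤ hi) :
    Yp true true true ω ≤ obsY (fun _ => 1) D1 D2 (imputedY lo hi Yp) ω := by
  rcases hD2.eq_zero_or_one ω with h2 | h2 <;>
    simp [obsY, obsD1, obsD2, imputedY, h1, h2, hhi]

lemma obsY_imputedY_le_of_untreated {ω : Ω} (hD2 : IsBinary (D2 false false))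
    (h0 : D1 false ω = 0) (hlo : lo ≤ Yp false false false ω) :
    obsY (fun _ => 0) D1 D2 (imputedY lo hi Yp) ω ≤ Yp false false false ω := by
  rcases hD2.eq_zero_or_one ω with h2 | h2 <;>
    simp [obsY, obsD1, obsD2, imputedY, h0, h2, hlo]

omit [MeasurableSpace Ω] in
lemma obsY_one_eq_obsY_zero {ω : Ω} (hD1 : D1 true ω = D1 false ω)
    (hD2 : ∀ d, D2 true d ω = D2 false d ω)
    (hY : ∀ d1 d2, Yp true d1 d2 ω = Yp false d1 d2 ω) :
    obsY (fun _ => 1) D1 D2 Yp ω = obsY (fun _ => 0) D1 D2 Yp ω := by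
  simp [obsY, obsD1, obsD2, hD1, hD2, hY]

lemma indicator_firstCompliers_le {ω : Ω} (hD1 : ∀ b, IsBinary (D1 b))
    (hD2 : ∀ b b', IsBinary (D2 b b')) (hmono : D1 false ω ≤ D1 true ω)
    (hexcl : ∀ d, Yp true d d ω = Yp false d d ω) (hdexcl : ∀ d, D2 true d ω = D2 false d ω)
    (hhi : Yp true true true ω ≤ hi) (hlo : lo ≤ Yp true false false ω) :
    (firstCompliers D1).indicator (fun ω => Yp true true true ω - Yp true false false ω) ω ≤
      obsY (fun _ => 1) D1 D2 (imputedY lo hi Yp) ω -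
        obsY (fun _ => 0) D1 D2 (imputedY lo hi Yp) ω := by
  by_cases hC : ω ∈ firstCompliers D1
  · obtain ⟨h1, h0⟩ := ((hD1 true).sub_eq_one_iff (hD1 false) ω).mp hC
    rw [Set.indicator_of_mem hC, hexcl false]
    exact sub_le_sub (le_obsY_imputedY_of_treated (hD2 true true) h1 hhi)
      (obsY_imputedY_le_of_untreated (hD2 false false) h0 (hexcl false ▸ hlo))
  · have hD1eq : D1 true ω = D1 false ω := by
      have hdiff := indicator_firstCompliers hD1 hmono
      rw [Set.indicator_of_notMem hC] at hdiff
      exact sub_eq_zero.mp hdiff.symm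
    have himputed (d1 d2 : Bool) :
        imputedY lo hi Yp true d1 d2 ω = imputedY lo hi Yp false d1 d2 ω := by
      cases d1 <;> cases d2
      exacts [hexcl false, rfl, rfl, hexcl true]
    rw [Set.indicator_of_notMem hC, obsY_one_eq_obsY_zero hD1eq hdexcl himputed, sub_self]

lemma setIntegral_firstCompliers_le [IsFiniteMeasure μ] (hD1 : ∀ b, IsBinary (D1 b))
    (hD2 : ∀ b b', IsBinary (D2 b b')) (hYint : ∀ z d, Integrable (Yp z d d) μ)
    (hmono : ∀ᵐ ω ∂μ, D1 false ω ≤ D1 true ω)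
    (hexcl : ∀ d, ∀ᵐ ω ∂μ, Yp true d d ω = Yp false d d ω)
    (hdexcl : ∀ d, ∀ᵐ ω ∂μ, D2 true d ω = D2 false d ω)
    (hhi : ∀ᵐ ω ∂μ, Yp true true true ω ≤ hi) (hlo : ∀ᵐ ω ∂μ, lo ≤ Yp true false false ω) :
    ∫ ω in firstCompliers D1, (Yp true true true ω - Yp true false false ω) ∂μ ≤
      ∫ ω, (obsY (fun _ => 1) D1 D2 (imputedY lo hi Yp) ω -
        obsY (fun _ => 0) D1 D2 (imputedY lo hi Yp) ω) ∂μ := by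
  have hC := measurableSet_firstCompliers fun b => (hD1 b).measurable
  have hint {z : ℝ} (hz : z = 0 ∨ z = 1) :
      Integrable (obsY (fun _ => z) D1 D2 (imputedY lo hi Yp)) μ :=
    integrable_obsY (.const hz) hD1 hD2 (integrable_imputedY hYint)
  rw [← integral_indicator hC]
  refine integral_mono_ae (((hYint true true).sub (hYint true false)).indicator hC)
    ((hint (.inr rfl)).sub (hint (.inl rfl))) ?_
  filter_upwards [hmono, ae_all_iff.mpr hexcl, ae_all_iff.mpr hdexcl, hhi, hlo]
    with ω hmono hexcl hdexcl hhi hlo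
  exact indicator_firstCompliers_le hD1 hD2 hmono hexcl hdexcl hhi hlo

end Compliers

theorem stmt_14_general
    {μ : Measure Ω} [IsProbabilityMeasure μ]
    {Z : Ω → ℝ} {D1 : Bool → Ω → ℝ} {D2 : Bool → Bool → Ω → ℝ}
    {Yp : Bool → Bool → Bool → Ω → ℝ}
    (hZ : IsBinary Z) (hD1 : ∀ b, IsBinary (D1 b)) (hD2 : ∀ b b', IsBinary (D2 b b'))
    (hYint : ∀ z d, Integrable (Yp z d d) μ)
    (hZpos : 0 < μ (Z ⁻¹' {1})) (hZlt : μ (Z ⁻¹' {1}) < 1)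
    (hindep : IndepFun (potentials D1 D2 Yp) Z μ)
    (hrel1 : 0 < dE μ Z (obsD1 Z D1))
    (hmono1 : ∀ᵐ ω ∂μ, D1 false ω ≤ D1 true ω)
    (hmono2 : ∀ᵐ ω ∂μ,
      D2 false true ω * D1 false ω + D2 false false ω * (1 - D1 false ω) ≤
        D2 true true ω * D1 true ω + D2 true false ω * (1 - D1 true ω))
    (hexcl : ∀ d, ∀ᵐ ω ∂μ, Yp true d d ω = Yp false d d ω)
    (hdexcl : ∀ d1, ∀ᵐ ω ∂μ, D2 true d1 ω = D2 false d1 ω)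
    {Ymin Ymax : ℝ} (hYmax : ∀ᵐ ω ∂μ, Yp true true true ω ≤ Ymax)
    (hYmin : ∀ᵐ ω ∂μ, Ymin ≤ Yp true false false ω) :
    (μ (CCev D1 D2 ∪ CNev D1 D2 ∪ CAev D1 D2)).toReal = dE μ Z (obsD1 Z D1) ∧
    (∫ ω in CCev D1 D2 ∪ CNev D1 D2 ∪ CAev D1 D2,
        (Yp true true true ω - Yp true false false ω) ∂μ) /
        (μ (CCev D1 D2 ∪ CNev D1 D2 ∪ CAev D1 D2)).toReal ≤
      (dE μ Z (fun ω =>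
        (1 - obsD1 Z D1 ω - obsD2 Z D1 D2 ω + 2 * obsD1 Z D1 ω * obsD2 Z D1 D2 ω) *
          obsY Z D1 D2 Yp ω) +
        Ymax * dE μ Z (fun ω => obsDor Z D1 D2 ω - obsD2 Z D1 D2 ω) -
        Ymin * dE μ Z (fun ω => obsDand Z D1 D2 ω - obsD2 Z D1 D2 ω)) / dE μ Z (obsD1 Z D1) := by
  have hZ0 := hZ.measure_preimage_zero_ne_zero hZlt
  have hC := union_complier_events_ae_eq_firstCompliers hD1 hD2 hmono2
  have hmass : (μ (CCev D1 D2 ∪ CNev D1 D2 ∪ CAev D1 D2)).toReal = dE μ Z (obsD1 Z D1) := by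
    rw [measure_congr hC, dE_obsD1_s14 hZ.measurable hZ0 hZpos.ne' (fun b => (hD1 b).measurable) hindep]
    exact measureReal_firstCompliers hD1 hmono1
  refine ⟨hmass, ?_⟩
  rw [hmass, setIntegral_congr_set hC, ← dE_obsY_imputedY hZ hD1 hD2 hYint,
    dE_obsY hZ.measurable hZ0 hZpos.ne' hD1 hD2 (integrable_imputedY hYint)
      (indepFun_potentials_imputedY hindep)]
  exact div_le_div_of_nonneg_right
    (setIntegral_firstCompliers_le hD1 hD2 hYint hmono1 hexcl hdexcl hYmax hYmin) hrel1.le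

theorem stmt_14
    (μ : Measure Ω) [IsProbabilityMeasure μ]
    (Z : Ω → ℝ) (D1 : Bool → Ω → ℝ) (D2 : Bool → Bool → Ω → ℝ)
    (Yp : Bool → Bool → Bool → Ω → ℝ)
    (hZmeas : Measurable Z)
    (hD1meas : ∀ b, Measurable (D1 b))
    (hD2meas : ∀ b b', Measurable (D2 b b'))
    (hYmeas : ∀ z d1 d2, Measurable (Yp z d1 d2))
    (hYint : ∀ z d1 d2, Integrable (Yp z d1 d2) μ)
    (hZ01 : ∀ ω, Z ω = 0 ∨ Z ω = 1)
    (hZpos : 0 < μ (Z ⁻¹' {1})) (hZlt : μ (Z ⁻¹' {1}) < 1)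
    (hD101 : ∀ b ω, D1 b ω = 0 ∨ D1 b ω = 1)
    (hD201 : ∀ b b' ω, D2 b b' ω = 0 ∨ D2 b b' ω = 1)
    (hindep : IndepFun
      (fun ω => ((fun b => D1 b ω), (fun b b' => D2 b b' ω), (fun z d1 d2 => Yp z d1 d2 ω))) Z μ)
    (hrel1 : 0 < dE μ Z (obsD1 Z D1))
    (hrel2 : 0 < dE μ Z (obsD2 Z D1 D2))
    (hrelAnd : 0 < dE μ Z (obsDand Z D1 D2))
    (hrelOr : 0 < dE μ Z (obsDor Z D1 D2))
    (hmono1 : ∀ᵐ ω ∂μ, D1 false ω ≤ D1 true ω)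
    (hmono2 : ∀ᵐ ω ∂μ,
      D2 false true ω * D1 false ω + D2 false false ω * (1 - D1 false ω) ≤
        D2 true true ω * D1 true ω + D2 true false ω * (1 - D1 true ω))
    (hexcl : ∀ d1 d2, ∀ᵐ ω ∂μ, Yp true d1 d2 ω = Yp false d1 d2 ω)
    (hdexcl : ∀ d1, ∀ᵐ ω ∂μ, D2 true d1 ω = D2 false d1 ω)
    (Ymin Ymax : ℝ) (hYlohi : Ymin ≤ Ymax)
    (hbound : ∀ z d1 d2, ∀ᵐ ω ∂μ, Ymin ≤ Yp z d1 d2 ω ∧ Yp z d1 d2 ω ≤ Ymax) :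
    (μ (CCev D1 D2 ∪ CNev D1 D2 ∪ CAev D1 D2)).toReal = dE μ Z (obsD1 Z D1) ∧
    (∫ ω in CCev D1 D2 ∪ CNev D1 D2 ∪ CAev D1 D2, (Yp true true true ω - Yp true false false ω) ∂μ) /
        (μ (CCev D1 D2 ∪ CNev D1 D2 ∪ CAev D1 D2)).toReal ≤
      (dE μ Z (fun ω =>
        (1 - obsD1 Z D1 ω - obsD2 Z D1 D2 ω + 2 * obsD1 Z D1 ω * obsD2 Z D1 D2 ω) *
          obsY Z D1 D2 Yp ω) +
        Ymax * dE μ Z (fun ω => obsDor Z D1 D2 ω - obsD2 Z D1 D2 ω) -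
        Ymin * dE μ Z (fun ω => obsDand Z D1 D2 ω - obsD2 Z D1 D2 ω)) / dE μ Z (obsD1 Z D1) :=
  stmt_14_general ⟨hZmeas, hZ01⟩ (fun b => ⟨hD1meas b, hD101 b⟩)
    (fun b b' => ⟨hD2meas b b', hD201 b b'⟩) (fun z d => hYint z d d) hZpos hZlt hindep hrel1
    hmono1 hmono2 (fun d => hexcl d d) hdexcl ((hbound true true true).mono fun _ h => h.2)
    ((hbound true false false).mono fun _ h => h.1)
end
end
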